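/- The derivative of D is strictly positive at every real R; consequently D is strictly increasing on the real line. -/

import Mathlib

/-!
Write `E = erfc (-R)`, `g = exp (-R²) / √π` and `A = R * E + g`. Since `E' = 2 g` and
`g' = -2 R g`, the derivatives simplify to `A' = E` and `D' = 4 A - 2 A E = 2 A (2 - E)`.
The three quantities `erfc`, `2 - erfc` and `A` are each nonnegative, because
`∫ exp (-t²)` over a half-line lies between `0` and `√π`, and
`A = (2 / √π) ∫ t in (-R, ∞), (t + R) exp (-t²)`. Each of them is also strictly monotone, so that
nonnegativity everywhere improves to positivity everywhere; hence `D' > 0`.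
-/


open MeasureTheory Filter

/-- The complementary error function. -/
noncomputable def erfc (x : ℝ) : ℝ :=
  2 / Real.sqrt Real.pi * ∫ t in Set.Ioi x, Real.exp (-t ^ 2)

/-- The denominator of the explosion-rate bound. -/
noncomputable def D (R : ℝ) : ℝ :=
  (1 + 2 * R ^ 2) * erfc (-R) + 2 * R * Real.exp (-R ^ 2) / Real.sqrt Real.pi -
    (R * erfc (-R) + Real.exp (-R ^ 2) / Real.sqrt Real.pi) ^ 2

/-- The explosion-rate bound. -/
noncomputable def C (R : ℝ) : ℝ := erfc (-R) / D R

lemma integrable_gauss : Integrable (fun t : ℝ => Real.exp (-t ^ 2)) := by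
  simpa using integrable_exp_neg_mul_sq (b := 1) one_pos

lemma hasDerivAt_erfc (x : ℝ) :
    HasDerivAt erfc (-(2 / Real.sqrt Real.pi * Real.exp (-x ^ 2))) x := by
  have hsplit : erfc = fun y => 2 / Real.sqrt Real.pi *
      ((∫ t in Set.Ioi (0 : ℝ), Real.exp (-t ^ 2)) - ∫ t in (0 : ℝ)..y, Real.exp (-t ^ 2)) := by
    funext y
    rw [erfc, ← intervalIntegral.integral_Ioi_sub_Ioi' integrable_gauss.integrableOn
      integrable_gauss.integrableOn]
    ring
  have hcont : Continuous (fun t : ℝ => Real.exp (-t ^ 2)) := by fun_prop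
  rw [hsplit]
  have h := ((hcont.integral_hasStrictDerivAt 0 x).hasDerivAt.const_sub
    (∫ t in Set.Ioi (0 : ℝ), Real.exp (-t ^ 2))).const_mul (2 / Real.sqrt Real.pi)
  refine HasDerivAt.congr_deriv h ?_
  ring

lemma strictAnti_erfc : StrictAnti erfc := by
  refine strictAnti_of_deriv_neg fun x => ?_
  rw [(hasDerivAt_erfc x).deriv]
  have : 0 < Real.sqrt Real.pi := Real.sqrt_pos.2 Real.pi_pos
  exact neg_lt_zero.2 (by positivity)

lemma erfc_pos (x : ℝ) : 0 < erfc x := by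
  have h0 : 0 ≤ erfc (x + 1) :=
    mul_nonneg (by positivity) (integral_nonneg fun t => (Real.exp_pos _).le)
  exact h0.trans_lt (strictAnti_erfc (lt_add_one x))

lemma erfc_lt_two (x : ℝ) : erfc x < 2 := by
  have hs : 0 < Real.sqrt Real.pi := Real.sqrt_pos.2 Real.pi_pos
  have hI : ∫ t in Set.Ioi (x - 1), Real.exp (-t ^ 2) ≤ Real.sqrt Real.pi := by
    have htotal : ∫ t : ℝ, Real.exp (-t ^ 2) = Real.sqrt Real.pi := by
      simpa using integral_gaussian 1
    rw [← htotal]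
    exact setIntegral_le_integral integrable_gauss
      (Eventually.of_forall fun t => (Real.exp_pos _).le)
  have h2 : erfc (x - 1) ≤ 2 := by
    calc erfc (x - 1) ≤ 2 / Real.sqrt Real.pi * Real.sqrt Real.pi :=
          mul_le_mul_of_nonneg_left hI (by positivity)
      _ = 2 := by field_simp
  exact (strictAnti_erfc (sub_one_lt x)).trans_le h2

/-- The function `R * erfc (-R) + exp (-R²) / √π` whose square is subtracted in `D`. -/
noncomputable def firstMoment (R : ℝ) : ℝ :=
  R * erfc (-R) + Real.exp (-R ^ 2) / Real.sqrt Real.pi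

lemma hasDerivAt_erfc_neg (R : ℝ) :
    HasDerivAt (fun y => erfc (-y)) (2 / Real.sqrt Real.pi * Real.exp (-R ^ 2)) R := by
  have h := (hasDerivAt_erfc (-R)).comp R (hasDerivAt_neg R)
  refine HasDerivAt.congr_deriv h ?_
  simp

lemma hasDerivAt_gauss (R : ℝ) :
    HasDerivAt (fun y : ℝ => Real.exp (-y ^ 2)) (-2 * R * Real.exp (-R ^ 2)) R := by
  have h := (hasDerivAt_pow 2 R).fun_neg.exp
  refine HasDerivAt.congr_deriv h ?_
  push_cast
  ring

lemma hasDerivAt_firstMoment (R : ℝ) : HasDerivAt firstMoment (erfc (-R)) R := by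
  have h := ((hasDerivAt_id R).mul (hasDerivAt_erfc_neg R)).add
    ((hasDerivAt_gauss R).div_const (Real.sqrt Real.pi))
  refine HasDerivAt.congr_deriv h ?_
  simp only [id]
  ring

lemma strictMono_firstMoment : StrictMono firstMoment := by
  refine strictMono_of_deriv_pos fun x => ?_
  rw [(hasDerivAt_firstMoment x).deriv]
  exact erfc_pos _

lemma firstMoment_nonneg (R : ℝ) : 0 ≤ firstMoment R := by
  have hint : Integrable (fun t : ℝ => t * Real.exp (-t ^ 2)) := by
    simpa using integrable_mul_exp_neg_mul_sq (b := 1) one_pos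
  -- The primitive `-exp (-t²) / 2` vanishes at infinity.
  have hlim : Tendsto (fun t : ℝ => -Real.exp (-t ^ 2) / 2) atTop (nhds 0) := by
    have h : Tendsto (fun t : ℝ => Real.exp (-t ^ 2)) atTop (nhds 0) :=
      Real.tendsto_exp_atBot.comp
        (tendsto_neg_atTop_atBot.comp (tendsto_pow_atTop two_ne_zero))
    simpa using h.neg.div_const 2
  have hmean : ∫ t in Set.Ioi (-R), t * Real.exp (-t ^ 2) = Real.exp (-R ^ 2) / 2 := by
    have h := integral_Ioi_of_hasDerivAt_of_tendsto' (a := -R)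
      (f := fun t : ℝ => -Real.exp (-t ^ 2) / 2) (f' := fun t => t * Real.exp (-t ^ 2))
      (fun t _ => by
        refine ((hasDerivAt_gauss t).neg.div_const 2).congr_deriv ?_
        ring)
      hint.integrableOn hlim
    rw [h, neg_sq]
    ring
  have hnonneg : 0 ≤ ∫ t in Set.Ioi (-R), (t * Real.exp (-t ^ 2) + R * Real.exp (-t ^ 2)) := by
    refine setIntegral_nonneg measurableSet_Ioi fun t ht => ?_
    rw [← add_mul]
    exact mul_nonneg (by linarith [Set.mem_Ioi.1 ht]) (Real.exp_pos _).le
  rw [integral_add hint.integrableOn (integrable_gauss.const_mul R).integrableOn,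
    integral_const_mul, hmean] at hnonneg
  have hrepr : firstMoment R = 2 / Real.sqrt Real.pi *
      (Real.exp (-R ^ 2) / 2 + R * ∫ t in Set.Ioi (-R), Real.exp (-t ^ 2)) := by
    rw [firstMoment, erfc]
    ring
  rw [hrepr]
  exact mul_nonneg (by positivity) hnonneg

lemma firstMoment_pos (R : ℝ) : 0 < firstMoment R :=
  (firstMoment_nonneg (R - 1)).trans_lt (strictMono_firstMoment (sub_one_lt R))

lemma hasDerivAt_D (R : ℝ) : HasDerivAt D (2 * firstMoment R * (2 - erfc (-R))) R := by
  have hpoly : HasDerivAt (fun y : ℝ => 1 + 2 * y ^ 2) (4 * R) R := by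
    refine (((hasDerivAt_pow 2 R).const_mul 2).const_add 1).congr_deriv ?_
    simp
    ring
  have hlin : HasDerivAt (fun y : ℝ => 2 * y) 2 R := by
    simpa using (hasDerivAt_id R).const_mul 2
  have h := ((hpoly.mul (hasDerivAt_erfc_neg R)).add
    ((hlin.mul (hasDerivAt_gauss R)).div_const (Real.sqrt Real.pi))).sub
    ((hasDerivAt_firstMoment R).pow 2)
  refine HasDerivAt.congr_deriv h ?_
  simp only [firstMoment]
  push_cast
  ring

theorem D_deriv_pos_and_strictMono : (∀ R : ℝ, 0 < deriv D R) ∧ StrictMono D := by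
  have hpos : ∀ R : ℝ, 0 < deriv D R := fun R => by
    rw [(hasDerivAt_D R).deriv]
    exact mul_pos (mul_pos two_pos (firstMoment_pos R)) (sub_pos.2 (erfc_lt_two _))
  exact ⟨hpos, strictMono_of_deriv_pos hpos⟩
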